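/- Let H be a real Hilbert space and c > 0. Let f, J : H → ℝ be Fréchet differentiable with gradients ∇f, ∇J, assume f is convex, and assume ∇J is strongly monotone: ⟪∇J(x) − ∇J(y), x − y⟫ ≥ c·‖x − y‖² for all x, y ∈ H. Suppose that for every α ∈ [0,1] there exists x_α ∈ H which attains the infimum of αf + J over H and satisfies the Euler–Lagrange equation α·∇f(x_α) + ∇J(x_α) = 0. Then the value function W(α) := inf_{x∈H}(α·f(x) + J(x)) is differentiable at every α ∈ (0,1), with W′(α) = f(x_α). -/

import Mathlib

open scoped RealInnerProductSpace

/-!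
Strong monotonicity of `∇J` makes `J` strongly convex. If `x` minimizes `α f + J`, the first-order
condition at `x` then improves to `J z ≥ J x - α ⟪∇f x, z - x⟫ + c/2 ‖z - x‖²`, while convexity
gives `f z ≥ f x + ⟪∇f x, z - x⟫`. Hence, for `β ≥ 0`,
`β f z + J z ≥ β f x + J x + (β - α) ⟪∇f x, z - x⟫ + c/2 ‖z - x‖²`, and completing the square
bounds the last two terms below by `-(β - α)² ‖∇f x‖² / (2c)`. So the infimum of `β f + J` agrees
with the affine function `β ↦ β f x + J x` up to `O((β - α)²)`, and its derivative at `α` is `f x`.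
-/

open Set Topology

section StrongConvexity

variable {E : Type*} [NormedAddCommGroup E] [NormedSpace ℝ E] {s : Set E} {f g : E → ℝ} {m : ℝ}

theorem add_sq_norm_le_of_strongly_monotone_fderivWithin {f' : E → StrongDual ℝ E}
    (hs : Convex ℝ s) (hf : ∀ z ∈ s, HasFDerivWithinAt f (f' z) s z)
    (hmono : ∀ z ∈ s, ∀ w ∈ s, m * ‖z - w‖ ^ 2 ≤ (f' z - f' w) (z - w))
    {x y : E} (hx : x ∈ s) (hy : y ∈ s) :
    f x + f' x (y - x) + m / 2 * ‖y - x‖ ^ 2 ≤ f y := by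
  let ℓ : ℝ → E := AffineMap.lineMap x y
  let φ : ℝ → ℝ := fun t ↦ f (ℓ t) - (t * f' x (y - x) + m / 2 * ‖y - x‖ ^ 2 * t ^ 2)
  have hℓ : MapsTo ℓ (Icc 0 1) s := fun t ht ↦ hs.lineMap_mem hx hy ht
  have hφ (t : ℝ) (ht : t ∈ Icc (0 : ℝ) 1) :
      HasDerivWithinAt φ ((f' (ℓ t) - f' x) (y - x) - m * t * ‖y - x‖ ^ 2) (Icc 0 1) t := by
    have hfℓ : HasDerivWithinAt (f ∘ ℓ) (f' (ℓ t) (y - x)) (Icc 0 1) t :=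
      (hf (ℓ t) (hℓ ht)).comp_hasDerivWithinAt t AffineMap.hasDerivWithinAt_lineMap hℓ
    have hquad : HasDerivAt (fun t ↦ t * f' x (y - x) + m / 2 * ‖y - x‖ ^ 2 * t ^ 2)
        (f' x (y - x) + m / 2 * ‖y - x‖ ^ 2 * (2 * t)) t := by
      simpa only [id, one_mul, Nat.cast_ofNat, Nat.add_one_sub_one, pow_one] using!
        ((hasDerivAt_id t).mul_const (f' x (y - x))).add
          ((hasDerivAt_pow 2 t).const_mul (m / 2 * ‖y - x‖ ^ 2))
    refine (hfℓ.sub hquad.hasDerivWithinAt).congr_deriv ?_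
    rw [sub_apply]
    ring
  have hφ_nonneg (t : ℝ) (ht : t ∈ interior (Icc (0 : ℝ) 1)) :
      0 ≤ (f' (ℓ t) - f' x) (y - x) - m * t * ‖y - x‖ ^ 2 := by
    have ht₀ : 0 < t := (interior_Icc (a := (0 : ℝ)) ▸ ht).1
    have h := hmono (ℓ t) (hℓ (interior_subset ht)) x hx
    have hsub : ℓ t - x = t • (y - x) := by simp [ℓ, AffineMap.lineMap_apply]
    rw [hsub, map_smul, norm_smul, Real.norm_of_nonneg ht₀.le, smul_eq_mul] at h
    refine sub_nonneg.2 (le_of_mul_le_mul_left ?_ ht₀)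
    linarith
  have hφ_mono : MonotoneOn φ (Icc 0 1) :=
    monotoneOn_of_hasDerivWithinAt_nonneg (convex_Icc 0 1)
      (fun t ht ↦ (hφ t ht).continuousWithinAt)
      (fun t ht ↦ (hφ t (interior_subset ht)).mono interior_subset) hφ_nonneg
  have h01 : φ 0 ≤ φ 1 :=
    hφ_mono (left_mem_Icc.2 zero_le_one) (right_mem_Icc.2 zero_le_one) zero_le_one
  simp only [φ, ℓ, AffineMap.lineMap_apply_zero, AffineMap.lineMap_apply_one] at h01
  linarith

theorem strongConvexOn_of_strongly_monotone_fderivWithin {f' : E → StrongDual ℝ E}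
    (hs : Convex ℝ s) (hf : ∀ z ∈ s, HasFDerivWithinAt f (f' z) s z)
    (hmono : ∀ z ∈ s, ∀ w ∈ s, m * ‖z - w‖ ^ 2 ≤ (f' z - f' w) (z - w)) :
    StrongConvexOn s m f := by
  refine ⟨hs, fun x hx y hy a b ha hb hab ↦ ?_⟩
  set p := a • x + b • y with hp
  have hps : p ∈ s := hs hx hy ha hb hab
  have hxp : x - p = b • (x - y) := by
    rw [hp, eq_sub_of_add_eq hab]
    module
  have hyp : y - p = -(a • (x - y)) := by
    rw [hp, eq_sub_of_add_eq' hab]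
    module
  have hfx := add_sq_norm_le_of_strongly_monotone_fderivWithin hs hf hmono hps hx
  have hfy := add_sq_norm_le_of_strongly_monotone_fderivWithin hs hf hmono hps hy
  rw [hxp, map_smul, norm_smul, Real.norm_of_nonneg hb, smul_eq_mul] at hfx
  rw [hyp, map_neg, norm_neg, map_smul, norm_smul, Real.norm_of_nonneg ha, smul_eq_mul] at hfy
  simp only [smul_eq_mul]
  calc
    f p = a * (f p + b * f' p (x - y) + m / 2 * (b * ‖x - y‖) ^ 2)
        + b * (f p + -(a * f' p (x - y)) + m / 2 * (a * ‖x - y‖) ^ 2)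
        - a * b * (m / 2 * ‖x - y‖ ^ 2) := by
      rw [eq_sub_of_add_eq hab]
      ring
    _ ≤ a * f x + b * f y - a * b * (m / 2 * ‖x - y‖ ^ 2) := by gcongr

theorem strongConvexOn_of_strongly_monotone_gradientWithin {F : Type*} [NormedAddCommGroup F]
    [InnerProductSpace ℝ F] [CompleteSpace F] {s : Set F} {f : F → ℝ} {f' : F → F}
    (hs : Convex ℝ s) (hf : ∀ z ∈ s, HasGradientWithinAt f (f' z) s z)
    (hmono : ∀ z ∈ s, ∀ w ∈ s, m * ‖z - w‖ ^ 2 ≤ ⟪f' z - f' w, z - w⟫) :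
    StrongConvexOn s m f :=
  strongConvexOn_of_strongly_monotone_fderivWithin hs (fun z hz ↦ (hf z hz).hasFDerivWithinAt)
    fun z hz w hw ↦ by
      rw [← map_sub, InnerProductSpace.toDual_apply_apply]
      exact hmono z hz w hw

theorem sub_fderivWithin_add_sq_norm_le_of_isMinOn_add {g' : StrongDual ℝ E} {x y : E}
    (hf : StrongConvexOn s m f) (hg : HasFDerivWithinAt g g' s x)
    (hmin : IsMinOn (fun z ↦ g z + f z) s x) (hx : x ∈ s) (hy : y ∈ s) :
    f x - g' (y - x) + m / 2 * ‖y - x‖ ^ 2 ≤ f y := by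
  let ℓ : ℝ → E := AffineMap.lineMap x y
  -- `φ` dominates `g (ℓ t) + f (ℓ t)` by strong convexity, with equality at `t = 0`.
  let φ : ℝ → ℝ := fun t ↦
    g (ℓ t) + ((1 - t) * f x + t * f y - (1 - t) * t * (m / 2 * ‖y - x‖ ^ 2))
  have hℓ : MapsTo ℓ (Icc 0 1) s := fun t ht ↦ hf.1.lineMap_mem hx hy ht
  have hφ_min : IsMinOn φ (Icc 0 1) 0 := by
    intro t ht
    have hfℓ : f (ℓ t) ≤ (1 - t) * f x + t * f y - (1 - t) * t * (m / 2 * ‖y - x‖ ^ 2) := by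
      simpa only [ℓ, AffineMap.lineMap_apply_module, norm_sub_rev x y, smul_eq_mul] using
        hf.2 hx hy (sub_nonneg.2 ht.2) ht.1 (sub_add_cancel 1 t)
    calc
      φ 0 = g x + f x := by simp [φ, ℓ]
      _ ≤ g (ℓ t) + f (ℓ t) := hmin (hℓ ht)
      _ ≤ φ t := add_le_add_right hfℓ _
  have hφ_deriv :
      HasDerivWithinAt φ (g' (y - x) + (f y - f x - m / 2 * ‖y - x‖ ^ 2)) (Icc 0 1) 0 := by
    have hgℓ : HasDerivWithinAt (g ∘ ℓ) (g' (y - x)) (Icc 0 1) 0 :=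
      HasFDerivWithinAt.comp_hasDerivWithinAt (0 : ℝ) (by simpa [ℓ] using hg)
        AffineMap.hasDerivWithinAt_lineMap hℓ
    have hid : HasDerivAt (fun t : ℝ ↦ t) 1 0 := hasDerivAt_id 0
    have hid' : HasDerivAt (fun t : ℝ ↦ 1 - t) (-1) 0 := hid.const_sub 1
    refine (hgℓ.add ((hid'.mul_const (f x)).add (hid.mul_const (f y)) |>.sub
      ((hid'.mul hid).mul_const (m / 2 * ‖y - x‖ ^ 2))).hasDerivWithinAt).congr_deriv ?_
    ring
  have hone : (1 : ℝ) ∈ posTangentConeAt (Icc 0 1) 0 :=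
    mem_posTangentConeAt_of_segment_subset (by simp [segment_eq_Icc])
  have hnonneg := hφ_min.localize.hasFDerivWithinAt_nonneg hφ_deriv.hasFDerivWithinAt hone
  simp only [ContinuousLinearMap.toSpanSingleton_apply, one_smul] at hnonneg
  linarith

theorem add_fderivWithin_le_of_convexOn {f' : StrongDual ℝ E} {x y : E} (hf : ConvexOn ℝ s f)
    (hf' : HasFDerivWithinAt f f' s x) (hx : x ∈ s) (hy : y ∈ s) :
    f x + f' (y - x) ≤ f y := by
  -- A convex function is `0`-strongly convex, and every point minimizes `-f + f`.
  have hmin : IsMinOn (fun z ↦ (-f) z + f z) s x := by simp [IsMinOn, IsMinFilter]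
  have h := sub_fderivWithin_add_sq_norm_le_of_isMinOn_add (strongConvexOn_zero.2 hf) hf'.neg
    hmin hx hy
  rwa [neg_apply, sub_neg_eq_add, zero_div, zero_mul, add_zero] at h

end StrongConvexity

section ValueFunction

variable {E : Type*} [NormedAddCommGroup E] [NormedSpace ℝ E] {s : Set E} {f J : E → ℝ}
  {c α β : ℝ} {x : E}

theorem mul_add_sub_sq_le_of_isMinOn {f' : StrongDual ℝ E} {y : E} (hc : 0 < c) (hβ : 0 ≤ β)
    (hf : ConvexOn ℝ s f) (hJ : StrongConvexOn s c J) (hf' : HasFDerivWithinAt f f' s x)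
    (hmin : IsMinOn (fun z ↦ α * f z + J z) s x) (hx : x ∈ s) (hy : y ∈ s) :
    β * f x + J x - ‖f'‖ ^ 2 / (2 * c) * (β - α) ^ 2 ≤ β * f y + J y := by
  have hfy : f x + f' (y - x) ≤ f y := add_fderivWithin_le_of_convexOn hf hf' hx hy
  have hJy : J x - α * f' (y - x) + c / 2 * ‖y - x‖ ^ 2 ≤ J y :=
    sub_fderivWithin_add_sq_norm_le_of_isMinOn_add hJ (hf'.const_mul α) hmin hx hy
  have hlin : -(|β - α| * (‖f'‖ * ‖y - x‖)) ≤ (β - α) * f' (y - x) := by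
    refine neg_le_of_abs_le ?_
    rw [abs_mul]
    gcongr
    exact f'.le_opNorm (y - x)
  have hsquare : 0 ≤ c / 2 * (‖y - x‖ - |β - α| * ‖f'‖ / c) ^ 2 := by positivity
  calc
    β * f x + J x - ‖f'‖ ^ 2 / (2 * c) * (β - α) ^ 2
      = β * f x + J x - |β - α| * (‖f'‖ * ‖y - x‖) + c / 2 * ‖y - x‖ ^ 2
          - c / 2 * (‖y - x‖ - |β - α| * ‖f'‖ / c) ^ 2 := by
      rw [← sq_abs (β - α)]
      field_simp
      ring
    _ ≤ β * f x + J x + (β - α) * f' (y - x) + c / 2 * ‖y - x‖ ^ 2 := by linarith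
    _ = β * (f x + f' (y - x)) + (J x - α * f' (y - x) + c / 2 * ‖y - x‖ ^ 2) := by ring
    _ ≤ β * f y + J y := by gcongr

theorem abs_iInf_mul_add_sub_le_of_isMinOn {f' : StrongDual ℝ E} (hc : 0 < c) (hβ : 0 ≤ β)
    (hf : ConvexOn ℝ s f) (hJ : StrongConvexOn s c J) (hf' : HasFDerivWithinAt f f' s x)
    (hmin : IsMinOn (fun z ↦ α * f z + J z) s x) (hx : x ∈ s) :
    |(⨅ z : s, (β * f z + J z)) - (β * f x + J x)| ≤ ‖f'‖ ^ 2 / (2 * c) * (β - α) ^ 2 := by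
  have hlower (z : s) : β * f x + J x - ‖f'‖ ^ 2 / (2 * c) * (β - α) ^ 2 ≤ β * f z + J z :=
    mul_add_sub_sq_le_of_isMinOn hc hβ hf hJ hf' hmin hx z.2
  have hbdd : BddBelow (range fun z : s ↦ β * f z + J z) := ⟨_, forall_mem_range.2 hlower⟩
  have : Nonempty s := ⟨⟨x, hx⟩⟩
  have hle : (⨅ z : s, (β * f z + J z)) ≤ β * f x + J x := ciInf_le hbdd ⟨x, hx⟩
  rw [abs_of_nonpos (sub_nonpos.2 hle)]
  linarith [le_ciInf hlower]

theorem value_function_differentiable_with_derivative_at_minimizer_general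
    (hc : 0 < c) (hα : 0 < α) (hf : ConvexOn ℝ s f) (hJ : StrongConvexOn s c J)
    (hf' : DifferentiableWithinAt ℝ f s x)
    (hmin : IsMinOn (fun z ↦ α * f z + J z) s x) (hx : x ∈ s) :
    HasDerivAt (fun β : ℝ ↦ ⨅ z : s, (β * f z + J z)) (f x) α := by
  obtain ⟨f', hf'⟩ := hf'
  have haffine : HasDerivAt (fun β ↦ β * f x + J x) (f x) α := by
    simpa using ((hasDerivAt_id α).mul_const (f x)).add_const (J x)
  have hquad : (fun β ↦ (⨅ z : s, (β * f z + J z)) - (β * f x + J x)) =O[𝓝 α]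
      fun β ↦ ‖β - α‖ ^ 2 := by
    refine Asymptotics.IsBigO.of_bound (‖f'‖ ^ 2 / (2 * c)) ?_
    filter_upwards [lt_mem_nhds hα] with β hβ
    simpa using abs_iInf_mul_add_sub_le_of_isMinOn hc hβ.le hf hJ hf' hmin hx
  have herror := (hquad.hasFDerivAt one_lt_two).hasDerivAt
  simpa only [Pi.add_def, sub_add_cancel, zero_apply, zero_add] using herror.add haffine

end ValueFunction

/-- Final step in the proof of Theorem 25: differentiability of the deterministic value
function `W(α) = inf_z (α f(z) + J(z))` with `W'(α) = f(x_α)` at the minimizers `x_α`,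
for convex differentiable `f` and strongly monotone `∇J`, the minimizers satisfying the
Euler–Lagrange equations. -/
theorem value_function_differentiable_with_derivative_at_minimizer
    {H : Type*} [NormedAddCommGroup H] [InnerProductSpace ℝ H] [CompleteSpace H]
    (c : ℝ) (hc : 0 < c)
    (f J : H → ℝ) (f' J' : H → H)
    (hf' : ∀ z, HasGradientAt f (f' z) z)
    (hJ' : ∀ z, HasGradientAt J (J' z) z)
    (hconv : ConvexOn ℝ Set.univ f)
    (hmono : ∀ z w : H, c * ‖z - w‖ ^ 2 ≤ ⟪J' z - J' w, z - w⟫)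
    (x : ℝ → H)
    (hmin : ∀ α ∈ Set.Icc (0 : ℝ) 1, ∀ z : H, α * f (x α) + J (x α) ≤ α * f z + J z)
    (hEL : ∀ α ∈ Set.Icc (0 : ℝ) 1, α • f' (x α) + J' (x α) = 0) :
    ∀ α ∈ Set.Ioo (0 : ℝ) 1,
      HasDerivAt (fun β : ℝ => ⨅ z : H, (β * f z + J z)) (f (x α)) α := by
  have hJ : StrongConvexOn univ c J :=
    strongConvexOn_of_strongly_monotone_gradientWithin convex_univ
      (fun z _ ↦ hasGradientWithinAt_univ.2 (hJ' z)) fun z _ w _ ↦ hmono z w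
  intro α hα
  have hmin_α : IsMinOn (fun z ↦ α * f z + J z) univ (x α) :=
    fun z _ ↦ hmin α (Ioo_subset_Icc_self hα) z
  have hW (β : ℝ) : (⨅ z : (univ : Set H), (β * f z + J z)) = ⨅ z : H, (β * f z + J z) :=
    (Equiv.Set.univ H).iInf_comp (g := fun z ↦ β * f z + J z)
  simpa only [hW] using value_function_differentiable_with_derivative_at_minimizer_general hc hα.1
    hconv hJ (hf' (x α)).differentiableAt.differentiableWithinAt hmin_α (mem_univ (x α))
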